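/- arXiv:1207.3516 — 5 statements merged into one kernel-verified Lean document; each statement's English description precedes it below -/
import Mathlib

section
/- Let m ≥ 0. The spectrum of the free discrete Dirac operator D_m = [[m, d],[d*, −m]] on ℓ²(ℤ,ℂ²) is exactly [−√(m²+4), −m] ∪ [m, √(m²+4)]. -/
/-- Solutions on a half line of `a (n + 2) - (r + r⁻¹) a (n + 1) + a n = 0` with `‖r‖ = 1`
cannot decay unless they vanish. -/
lemma eq_zero_of_recurrence_of_tendsto_zero {r c : ℂ} (hr : ‖r‖ = 1) (hrc : r * r + 1 = c * r)
    {a : ℕ → ℂ} (ha : Filter.Tendsto a Filter.atTop (nhds 0))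
    (hrec : ∀ n, a (n + 2) - c * a (n + 1) + a n = 0) (n : ℕ) : a n = 0 := by
  have eq_zero_of_norm_succ : ∀ b : ℕ → ℂ, Filter.Tendsto b Filter.atTop (nhds 0) →
      (∀ n, ‖b (n + 1)‖ = ‖b n‖) → ∀ n, b n = 0 := by
    intro b hb hsucc n
    have hconst : ∀ k, ‖b k‖ = ‖b 0‖ := fun k => by
      induction k with
      | zero => rfl
      | succ k ih => rw [hsucc, ih]
    have hlim : Filter.Tendsto (fun k => ‖b k‖) Filter.atTop (nhds 0) := by simpa using hb.norm
    simp only [hconst] at hlim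
    rw [← norm_eq_zero, hconst]
    exact tendsto_nhds_unique tendsto_const_nhds hlim
  have hr0 : r ≠ 0 := by
    rintro rfl
    simp at hr
  have hfirst : ∀ n, a (n + 1) - r * a n = 0 := by
    refine eq_zero_of_norm_succ _ ?_ fun n => ?_
    · simpa using (ha.comp (Filter.tendsto_add_atTop_nat 1)).sub (ha.const_mul r)
    · have h : r * (a (n + 1 + 1) - r * a (n + 1)) = a (n + 1) - r * a n := by
        linear_combination r * hrec n - a (n + 1) * hrc
      rw [← h, norm_mul, hr, one_mul]
  refine eq_zero_of_norm_succ a ha (fun n => ?_) n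
  rw [sub_eq_zero.mp (hfirst n), norm_mul, hr, one_mul]

section Shift

variable {E : Type*} [NormedAddCommGroup E]

lemma Memℓp.comp_add_right {f : ℤ → E} (hf : Memℓp f 2) (k : ℤ) :
    Memℓp (fun n => f (n + k)) 2 := by
  rw [memℓp_gen_iff (by norm_num)] at hf ⊢
  exact (Equiv.addRight k).summable_iff.mpr hf

variable [NormedSpace ℂ E]

/-- Translation by `k` on `ℓ²(ℤ, E)`. -/
noncomputable def lpTranslate (k : ℤ) :
    lp (fun _ : ℤ => E) 2 →ₗᵢ[ℂ] lp (fun _ : ℤ => E) 2 where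
  toFun f := ⟨fun n => f (n + k), (lp.memℓp f).comp_add_right k⟩
  map_add' _ _ := rfl
  map_smul' _ _ := rfl
  norm_map' f := by
    rw [lp.norm_eq_tsum_rpow (by norm_num), lp.norm_eq_tsum_rpow (by norm_num)]
    congr 1
    exact (Equiv.addRight k).tsum_eq fun n => ‖f n‖ ^ (2 : ENNReal).toReal

@[simp]
lemma lpTranslate_apply (k : ℤ) (f : lp (fun _ : ℤ => E) 2) (n : ℤ) :
    lpTranslate k f n = f (n + k) := rfl

/-- The unit shift as an invertible bounded operator on `ℓ²(ℤ, E)`. -/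
noncomputable def lpShift : (lp (fun _ : ℤ => E) 2 →L[ℂ] lp (fun _ : ℤ => E) 2)ˣ where
  val := (lpTranslate 1).toContinuousLinearMap
  inv := (lpTranslate (-1)).toContinuousLinearMap
  val_inv := by
    ext f : 2
    funext n
    simp
  inv_val := by
    ext f : 2
    funext n
    simp

lemma lpShift_apply (f : lp (fun _ : ℤ => E) 2) (n : ℤ) : lpShift.val f n = f (n + 1) := rfl

lemma lpShift_inv_apply (f : lp (fun _ : ℤ => E) 2) (n : ℤ) :
    lpShift⁻¹.val f n = f (n - 1) := rfl

lemma norm_eq_one_of_mem_spectrum_lpShift [CompleteSpace E] {z : ℂ}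
    (hz : z ∈ spectrum ℂ (lpShift : (lp (fun _ : ℤ => E) 2 →L[ℂ] lp (fun _ : ℤ => E) 2)ˣ).val) :
    ‖z‖ = 1 := by
  have norm_le_one : ∀ (k : ℤ) (w : ℂ),
      w ∈ spectrum ℂ (lpTranslate (E := E) k).toContinuousLinearMap → ‖w‖ ≤ 1 := by
    intro k w hw
    refine (spectrum.norm_le_norm_mul_of_mem hw).trans ?_
    exact mul_le_one₀ (LinearIsometry.norm_toContinuousLinearMap_le _) (norm_nonneg _)
      ContinuousLinearMap.norm_id_le
  have hz0 : z ≠ 0 := spectrum.ne_zero_of_mem_of_unit hz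
  have hinv : ‖z⁻¹‖ ≤ 1 := by
    refine norm_le_one (-1) _ ?_
    exact (spectrum.inv_mem_iff (r := Units.mk0 z hz0) (a := lpShift)).mp hz
  rw [norm_inv] at hinv
  exact le_antisymm (norm_le_one 1 z hz) ((inv_le_one₀ (norm_pos_iff.mpr hz0)).mp hinv)

end Shift

/-- The set of squares `[m², m² + 4]` characterizes the two spectral bands. -/
lemma mem_dirac_bands_iff {m : ℝ} (hm : 0 ≤ m) (x : ℝ) :
    x ∈ Set.Icc (-√(m ^ 2 + 4)) (-m) ∪ Set.Icc m √(m ^ 2 + 4) ↔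
      m ^ 2 ≤ x ^ 2 ∧ x ^ 2 ≤ m ^ 2 + 4 := by
  have hpos : 0 ≤ m ^ 2 + 4 := by positivity
  rw [← sq_abs x, sq_le_sq₀ hm (abs_nonneg x), ← Real.le_sqrt (abs_nonneg x) hpos]
  simp only [Set.mem_union, Set.mem_Icc, le_abs, abs_le]
  have := Real.sqrt_nonneg (m ^ 2 + 4)
  constructor
  · rintro (⟨h₁, h₂⟩ | ⟨h₁, h₂⟩)
    · exact ⟨Or.inr (by linarith), h₁, by linarith⟩
    · exact ⟨Or.inl h₁, by linarith, h₂⟩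
  · rintro ⟨h | h, h₁, h₂⟩
    · exact Or.inr ⟨h, h₂⟩
    · exact Or.inl ⟨h₁, by linarith⟩

/-- If `z² = m² + 2 - (r + r⁻¹)` with `‖r‖ = 1`, then `z` lies in the spectral bands. -/
lemma mem_dirac_bands_of_norm_eq_one {m : ℝ} (hm : 0 ≤ m) {z r : ℂ} (hr : ‖r‖ = 1)
    (hzr : r * r + 1 = (2 + (m : ℂ) ^ 2 - z ^ 2) * r) :
    z ∈ (fun x : ℝ => (x : ℂ)) ''
      (Set.Icc (-√(m ^ 2 + 4)) (-m) ∪ Set.Icc m √(m ^ 2 + 4)) := by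
  have hr0 : r ≠ 0 := by
    rintro rfl
    simp at hr
  have hconj : r * (starRingEnd ℂ) r = 1 := by
    rw [Complex.mul_conj, Complex.normSq_eq_norm_sq, hr]
    norm_num
  have hsum : 2 + (m : ℂ) ^ 2 - z ^ 2 = (2 * r.re : ℝ) := by
    rw [← Complex.add_conj]
    refine mul_right_cancel₀ hr0 ?_
    linear_combination -hzr - hconj
  have hre := abs_le.mp (hr ▸ Complex.abs_re_le_norm r)
  set s : ℝ := m ^ 2 + 2 - 2 * r.re with hs
  have hs0 : 0 ≤ s := by nlinarith
  have hzs : z ^ 2 = ((√s : ℝ) : ℂ) ^ 2 := by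
    rw [← Complex.ofReal_pow, Real.sq_sqrt hs0, hs]
    push_cast at hsum ⊢
    linear_combination -hsum
  have hsq : m ^ 2 ≤ √s ^ 2 ∧ √s ^ 2 ≤ m ^ 2 + 4 := by
    rw [Real.sq_sqrt hs0]
    constructor <;> linarith
  rcases sq_eq_sq_iff_eq_or_eq_neg.mp hzs with h | h
  · exact ⟨√s, (mem_dirac_bands_iff hm _).mpr hsq, h.symm⟩
  · exact ⟨-√s, (mem_dirac_bands_iff hm _).mpr (by simpa using hsq), by simp [h]⟩

/-- A sequence in `ℓ²(ℤ, ℂ²)` tends to zero, componentwise, along any injective sequence of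
indices. -/
lemma lp_tendsto_zero_comp (f : lp (fun _ : ℤ => EuclideanSpace ℂ (Fin 2)) 2) (i : Fin 2)
    {e : ℕ → ℤ} (he : Function.Injective e) :
    Filter.Tendsto (fun n => f (e n) i) Filter.atTop (nhds 0) := by
  have hsum : Summable fun n => ‖f n‖ ^ 2 := by
    simpa using (memℓp_gen_iff (by norm_num)).mp (lp.memℓp f)
  have hsqrt := (hsum.comp_injective he).tendsto_atTop_zero.sqrt
  simp only [Function.comp_def, Real.sqrt_zero, Real.sqrt_sq (norm_nonneg _)] at hsqrt
  exact squeeze_zero_norm (fun n => PiLp.norm_apply_le (f (e n)) i) hsqrt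

lemma algebraMap_sub_lp_apply
    (T : lp (fun _ : ℤ => EuclideanSpace ℂ (Fin 2)) 2 →L[ℂ]
      lp (fun _ : ℤ => EuclideanSpace ℂ (Fin 2)) 2) (z : ℂ)
    (f : lp (fun _ : ℤ => EuclideanSpace ℂ (Fin 2)) 2) (n : ℤ) (i : Fin 2) :
    ((algebraMap ℂ _ z - T) f) n i = z * f n i - (T f) n i := rfl

lemma algebraMap_add_lp_apply
    (T : lp (fun _ : ℤ => EuclideanSpace ℂ (Fin 2)) 2 →L[ℂ]
      lp (fun _ : ℤ => EuclideanSpace ℂ (Fin 2)) 2) (z : ℂ)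
    (f : lp (fun _ : ℤ => EuclideanSpace ℂ (Fin 2)) 2) (n : ℤ) (i : Fin 2) :
    ((algebraMap ℂ _ z + T) f) n i = z * f n i + (T f) n i := rfl


/- The free discrete Dirac operator `D_m = [[m, d], [d*, -m]]` on `ℓ²(ℤ, ℂ²)`,
characterized by its pointwise action, has spectrum
`[-√(m²+4), -m] ∪ [m, √(m²+4)]`. Here `(d f)(n) = f n - f (n+1)` and
`(d* f)(n) = f n - f (n-1)`, and `ℓ²(ℤ, ℂ²)` is modeled as
`lp (fun _ : ℤ => EuclideanSpace ℂ (Fin 2)) 2`. -/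
theorem dirac_spectrum_Z (m : ℝ) (hm : 0 ≤ m)
    (D : lp (fun _ : ℤ => EuclideanSpace ℂ (Fin 2)) 2 →L[ℂ]
      lp (fun _ : ℤ => EuclideanSpace ℂ (Fin 2)) 2)
    (hD0 : ∀ (f : lp (fun _ : ℤ => EuclideanSpace ℂ (Fin 2)) 2) (n : ℤ),
      (D f) n 0 = m * f n 0 + (f n 1 - f (n + 1) 1))
    (hD1 : ∀ (f : lp (fun _ : ℤ => EuclideanSpace ℂ (Fin 2)) 2) (n : ℤ),
      (D f) n 1 = (f n 0 - f (n - 1) 0) - m * f n 1) :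
    spectrum ℂ D = (fun x : ℝ => (x : ℂ)) ''
      (Set.Icc (-Real.sqrt (m ^ 2 + 4)) (-m) ∪ Set.Icc m (Real.sqrt (m ^ 2 + 4))) := by
  ext z
  constructor
  · intro hz
    by_contra hband
    refine hz ?_
    set c : ℂ := 2 + (m : ℂ) ^ 2 - z ^ 2 with hc
    obtain ⟨r, hrc⟩ : ∃ r : ℂ, r * r + 1 = c * r := by
      obtain ⟨r, hr⟩ := exists_quadratic_eq_zero (a := (1 : ℂ)) (b := -c) (c := 1) one_ne_zero
        (IsAlgClosed.exists_eq_mul_self _)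
      exact ⟨r, by linear_combination hr⟩
    have hr0 : r ≠ 0 := by
      rintro rfl
      simp at hrc
    have hr1 : ‖r‖ ≠ 1 := fun h => hband (mem_dirac_bands_of_norm_eq_one hm h hrc)
    have isUnit_sub : ∀ w : ℂ, ‖w‖ ≠ 1 →
        IsUnit (algebraMap ℂ _ w - (lpShift (E := EuclideanSpace ℂ (Fin 2))).val) :=
      fun w hw => spectrum.notMem_iff.mp fun h => hw (norm_eq_one_of_mem_spectrum_lpShift h)
    have hfactor : (algebraMap ℂ _ z - D) * (algebraMap ℂ _ z + D) =
        lpShift⁻¹.val * ((algebraMap ℂ _ r - lpShift.val) * (algebraMap ℂ _ r⁻¹ - lpShift.val)) := by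
      have hr' := mul_inv_cancel₀ hr0
      have hsum : r + r⁻¹ = c := by
        field_simp
        linear_combination hrc
      ext f : 2
      funext n
      ext i
      simp only [mul_apply_eq_comp, algebraMap_sub_lp_apply, lpShift_apply,
        lpShift_inv_apply]
      fin_cases i
      · simp only [Fin.zero_eta, hD0, hD1, algebraMap_add_lp_apply, sub_add_cancel,
          add_sub_cancel_right]
        linear_combination f n 0 * (hsum + hc) - f (n - 1) 0 * hr'
      · simp only [Fin.mk_one, hD0, hD1, algebraMap_add_lp_apply, sub_add_cancel]
        linear_combination f n 1 * (hsum + hc) - f (n - 1) 1 * hr'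
    have hcomm : Commute (algebraMap ℂ _ z - D) (algebraMap ℂ _ z + D) := by
      have h := Algebra.commutes z D
      rw [commute_iff_eq]
      noncomm_ring
      simp [h]
    refine (hcomm.isUnit_mul_iff.mp ?_).1
    rw [hfactor]
    exact lpShift⁻¹.isUnit.mul ((isUnit_sub r hr1).mul (isUnit_sub r⁻¹ (by simpa using hr1)))
  · rintro ⟨x, hx, rfl⟩ hunit
    obtain ⟨hx₁, hx₂⟩ := (mem_dirac_bands_iff hm x).mp hx
    set θ : ℝ := Real.arccos ((2 + m ^ 2 - x ^ 2) / 2) with hθ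
    have hcos : 2 * Real.cos θ = 2 + m ^ 2 - x ^ 2 := by
      rw [hθ, Real.cos_arccos (by linarith) (by linarith)]
      ring
    set c : ℂ := 2 + (m : ℂ) ^ 2 - (x : ℂ) ^ 2 with hc
    have hrc : Complex.exp (θ * Complex.I) * Complex.exp (θ * Complex.I) + 1 =
        c * Complex.exp (θ * Complex.I) := by
      have hc' : c = 2 * Complex.cos θ := by
        rw [hc]
        exact_mod_cast hcos.symm
      rw [hc', Complex.two_cos, add_mul, ← Complex.exp_add, ← Complex.exp_add]
      simp
    have vanish := fun {a : ℕ → ℂ} => eq_zero_of_recurrence_of_tendsto_zero (a := a)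
      (Complex.norm_exp_ofReal_mul_I θ) hrc
    obtain ⟨f, hf⟩ := ((ContinuousLinearMap.isUnit_iff_bijective).mp hunit).2
      (lp.single 2 0 (EuclideanSpace.single 0 1))
    have hf0 : ∀ n : ℤ, x * f n 0 - (m * f n 0 + (f n 1 - f (n + 1) 1)) =
        if n = 0 then 1 else 0 := by
      intro n
      have h := congrArg (fun g : lp (fun _ : ℤ => EuclideanSpace ℂ (Fin 2)) 2 => g n 0) hf
      rw [algebraMap_sub_lp_apply, hD0, lp.single_apply] at h
      rw [h]
      by_cases hn : n = 0
      · subst hn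
        simp
      · simp [hn]
    have hf1 : ∀ n : ℤ, x * f n 1 - ((f n 0 - f (n - 1) 0) - m * f n 1) = 0 := by
      intro n
      have h := congrArg (fun g : lp (fun _ : ℤ => EuclideanSpace ℂ (Fin 2)) 2 => g n 1) hf
      rw [algebraMap_sub_lp_apply, hD1, lp.single_apply] at h
      rw [h]
      by_cases hn : n = 0
      · subst hn
        simp
      · simp [hn]
    have hrec : ∀ n : ℤ, f (n + 1) 1 - c * f n 1 + f (n - 1) 1 =
        (if n = 0 then 1 else 0) - (if n = 1 then 1 else 0) := by
      intro n
      have hprev := hf0 (n - 1)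
      rw [sub_add_cancel] at hprev
      simp only [sub_eq_zero] at hprev
      linear_combination hf0 n - hprev + (x - m) * hf1 n
    have hright := vanish (a := fun n => f (n + 1) 1)
      (lp_tendsto_zero_comp f 1 (e := fun n => n + 1) fun a b h => by simpa using h) fun n => by
        have h := hrec (n + 2)
        rw [if_neg (by omega), if_neg (by omega), sub_zero] at h
        rw [← h]
        push_cast
        ring_nf
    have hleft := vanish (a := fun n => f (-n) 1)
      (lp_tendsto_zero_comp f 1 (e := fun n => -n) fun a b h => by simpa using h) fun n => by
        have h := hrec (-n - 1)
        rw [if_neg (by omega), if_neg (by omega), sub_zero] at h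
        rw [← h]
        push_cast
        ring_nf
    have h := hrec 0
    have h₀ := hleft 0
    have h₁ := hleft 1
    have h₂ := hright 0
    simp at h h₀ h₁ h₂
    simp [h₀, h₁, h₂] at h
end

section
/- Let m ≥ 0. The free discrete Dirac operator D_m on ℓ²(ℤ₊,ℂ²) (ℤ₊ := ℤ ∩ [0,∞)) has no eigenvalues (D_m f = λ f with f ∈ ℓ²(ℤ₊,ℂ²) forces f = 0), and its spectrum is exactly [−√(m²+4), −m] ∪ [m, √(m²+4)]. -/
open Filter Topology

theorem eq_zero_of_succ_eq_of_tendsto {α : Type*} [TopologicalSpace α] [T2Space α] [Zero α]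
    {x : ℕ → α} (hx : ∀ n, x (n + 1) = x n) (hlim : Tendsto x atTop (𝓝 0)) (n : ℕ) :
    x n = 0 := by
  have hconst : ∀ n, x n = x 0 := by
    intro n
    induction n with
    | zero => rfl
    | succ k ih => rw [hx, ih]
  rw [funext hconst] at hlim
  exact (hconst n).trans (tendsto_nhds_unique tendsto_const_nhds hlim)

/-- The quadratic form `|u (n+1)|² - t Re (u (n+1) * conj (u n)) + |u n|²` is conserved along the
recurrence and is bounded below by `(|u (n+1)| - |u n|)²`. -/
theorem eq_zero_of_three_term_of_tendsto {u : ℕ → ℂ} {t : ℝ} (ht : |t| ≤ 2)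
    (hrec : ∀ n, u (n + 2) = t * u (n + 1) - u n) (hu : Tendsto u atTop (𝓝 0)) (n : ℕ) :
    u n = 0 := by
  set Q : ℕ → ℝ := fun n => ‖u (n + 1)‖ ^ 2 - t * (u (n + 1) * star (u n)).re + ‖u n‖ ^ 2 with hQ
  have hstep : ∀ n, Q (n + 1) = Q n := by
    intro n
    simp only [hQ, hrec n, Complex.sq_norm, Complex.normSq_apply, Complex.star_def]
    simp
    ring
  have hu' : Tendsto (fun n => u (n + 1)) atTop (𝓝 0) := hu.comp (tendsto_add_atTop_nat 1)
  have hlim : Tendsto Q atTop (𝓝 0) := by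
    have h := ((hu'.norm.pow 2).sub
      ((Complex.continuous_re.tendsto _).comp (hu'.mul hu.star) |>.const_mul t)).add (hu.norm.pow 2)
    simpa [hQ] using h
  have hnorm : ∀ n, ‖u (n + 1)‖ = ‖u n‖ := by
    intro n
    have h0 : Q n = 0 := eq_zero_of_succ_eq_of_tendsto hstep hlim n
    have h1 : |(u (n + 1) * star (u n)).re| ≤ ‖u (n + 1)‖ * ‖u n‖ := by
      simpa using Complex.abs_re_le_norm (u (n + 1) * star (u n))
    have h2 : t * (u (n + 1) * star (u n)).re ≤ 2 * (‖u (n + 1)‖ * ‖u n‖) := by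
      refine (le_abs_self _).trans ?_
      rw [abs_mul]
      gcongr
    have h3 : (‖u (n + 1)‖ - ‖u n‖) ^ 2 ≤ 0 := by
      simp only [hQ] at h0
      nlinarith
    nlinarith [pow_eq_zero_iff (two_ne_zero) |>.1 (le_antisymm h3 (sq_nonneg _))]
  exact norm_eq_zero.1 (eq_zero_of_succ_eq_of_tendsto hnorm (by simpa using hu.norm) n)

theorem dirac_recursion_eq_zero {m l : ℝ} (h₁ : m ^ 2 ≤ l ^ 2) (h₂ : l ^ 2 ≤ m ^ 2 + 4)
    {a b : ℕ → ℂ} {c : ℂ} (ha : Tendsto a atTop (𝓝 0)) (hb : Tendsto b atTop (𝓝 0))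
    (h0 : ∀ n, m * a n + (b n - b (n + 1)) = l * a n)
    (h1 : ∀ n, (a (n + 1) - a n) - m * b (n + 1) = l * b (n + 1))
    (h1' : a 0 - m * b 0 = l * b 0 + c) :
    c = 0 ∧ a = 0 ∧ b = 0 := by
  let u : ℕ → ℂ := fun n => Nat.casesOn n c a
  have hu : Tendsto u atTop (𝓝 0) := (tendsto_add_atTop_iff_nat 1).1 ha
  have hz := eq_zero_of_three_term_of_tendsto (u := u) (t := 2 - (l ^ 2 - m ^ 2))
    (by rw [abs_le]; constructor <;> linarith) (by
      rintro (_ | n)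
      · change a 1 = _ * a 0 - c
        push_cast
        linear_combination h1 0 - h1' - (m + l) * h0 0
      · change a (n + 2) = _ * a (n + 1) - a n
        push_cast
        linear_combination h1 (n + 1) - h1 n - (m + l) * h0 (n + 1)) hu
  have hA : ∀ n, a n = 0 := fun n => hz (n + 1)
  have hB : ∀ n, b (n + 1) = b n := fun n => by linear_combination - h0 n + (m - l) * hA n
  exact ⟨hz 0, funext hA, funext (eq_zero_of_succ_eq_of_tendsto hB hb)⟩

/-- The space `ℓ²(ℕ, ℂ²)`. -/
abbrev SpinorL2 : Type := lp (fun _ : ℕ => EuclideanSpace ℂ (Fin 2)) 2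

namespace SpinorL2

theorem hasSum_norm_sq (f : SpinorL2) : HasSum (fun n => ‖f n‖ ^ 2) (‖f‖ ^ 2) := by
  simpa using lp.hasSum_norm (p := 2) (by simp) f

theorem tendsto_coord (f : SpinorL2) (i : Fin 2) : Tendsto (fun n => f n i) atTop (𝓝 0) := by
  have h := f.hasSum_norm_sq.summable.tendsto_atTop_zero.sqrt
  simp only [norm_nonneg, Real.sqrt_sq, Real.sqrt_zero] at h
  exact squeeze_zero_norm (fun n => PiLp.norm_apply_le (f n) i) h

theorem ext_coord {f g : SpinorL2} (h0 : ∀ n, f n 0 = g n 0) (h1 : ∀ n, f n 1 = g n 1) :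
    f = g := by
  ext n i
  fin_cases i
  · exact h0 n
  · exact h1 n

theorem norm_apply_sq (f : SpinorL2) (n : ℕ) : ‖f n‖ ^ 2 = ‖f n 0‖ ^ 2 + ‖f n 1‖ ^ 2 := by
  rw [EuclideanSpace.norm_sq_eq, Fin.sum_univ_two]

/-- The vector supported at site `0` with lower component `c` and upper component `0`. -/
noncomputable def lowerDelta (c : ℂ) : SpinorL2 :=
  lp.single (E := fun _ : ℕ => EuclideanSpace ℂ (Fin 2)) 2 0 (EuclideanSpace.single 1 c)

theorem lowerDelta_apply_zero (c : ℂ) : lowerDelta c 0 = EuclideanSpace.single 1 c :=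
  lp.single_apply_self 2 0 _

theorem lowerDelta_apply_succ (c : ℂ) (n : ℕ) : lowerDelta c (n + 1) = 0 :=
  lp.single_apply_ne 2 0 _ n.succ_ne_zero

@[simp]
theorem lowerDelta_zero : lowerDelta 0 = 0 := by
  have h : EuclideanSpace.single (1 : Fin 2) (0 : ℂ) = 0 := by
    ext i
    simp
  rw [lowerDelta, h, lp.single_zero]

/-- `D` acts as the free discrete Dirac operator of mass `m` on the half-line. -/
structure IsFreeDirac (m : ℝ) (D : SpinorL2 →L[ℂ] SpinorL2) : Prop where
  upper : ∀ (f : SpinorL2) (n : ℕ), D f n 0 = m * f n 0 + (f n 1 - f (n + 1) 1)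
  lower_succ : ∀ (f : SpinorL2) (n : ℕ),
    D f (n + 1) 1 = (f (n + 1) 0 - f n 0) - m * f (n + 1) 1
  lower_zero : ∀ f : SpinorL2, D f 0 1 = f 0 0 - m * f 0 1

namespace IsFreeDirac

variable {m : ℝ} {D : SpinorL2 →L[ℂ] SpinorL2}

theorem isSelfAdjoint (hD : IsFreeDirac m D) : IsSelfAdjoint D := by
  rw [ContinuousLinearMap.isSelfAdjoint_iff_isSymmetric]
  intro f g
  have hsum := ((lp.hasSum_inner (𝕜 := ℂ) (D f) g).sub
    (lp.hasSum_inner (𝕜 := ℂ) f (D g))).tendsto_sum_nat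
  set w : ℕ → ℂ := fun n => g (n + 1) 1 * star (f n 0) - g n 0 * star (f (n + 1) 1)
  have hpartial : ∀ n, ∑ k ∈ Finset.range (n + 1),
      (inner ℂ (D f k) (g k) - inner ℂ (f k) (D g k)) = w n := by
    intro n
    induction n with
    | zero =>
      simp [PiLp.inner_apply, Fin.sum_univ_two, hD.upper, hD.lower_zero, w]
      ring
    | succ n ih =>
      rw [Finset.sum_range_succ, ih]
      simp [PiLp.inner_apply, Fin.sum_univ_two, hD.upper, hD.lower_succ, w]
      ring
  have hshift : ∀ (h : SpinorL2) (i : Fin 2), Tendsto (fun n => h (n + 1) i) atTop (𝓝 0) :=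
    fun h i => (h.tendsto_coord i).comp (tendsto_add_atTop_nat 1)
  have hw : Tendsto w atTop (𝓝 0) := by
    simpa [w] using ((hshift g 1).mul (f.tendsto_coord 0).star).sub
      ((g.tendsto_coord 0).mul (hshift f 1).star)
  have hsum' := hsum.comp (tendsto_add_atTop_nat 1)
  exact sub_eq_zero.1 (tendsto_nhds_unique (hsum'.congr hpartial) hw)

theorem norm_sq_sub_le (hD : IsFreeDirac m D) :
    ‖D ^ 2 - algebraMap ℂ (SpinorL2 →L[ℂ] SpinorL2) (m ^ 2 + 2)‖ ≤ 2 := by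
  refine ContinuousLinearMap.opNorm_le_bound _ zero_le_two fun f => ?_
  set g : SpinorL2 := (D ^ 2 - algebraMap ℂ (SpinorL2 →L[ℂ] SpinorL2) (m ^ 2 + 2)) f with hg
  have hgf : ∀ n i, g n i = D (D f) n i - (m ^ 2 + 2) * f n i := by
    intro n i
    rw [hg, pow_two, Algebra.algebraMap_eq_smul_one]
    rfl
  have h00 : g 0 0 = -f 1 0 := by
    rw [hgf, hD.upper, hD.upper, hD.lower_succ, hD.lower_zero]; ring
  have h01 : g 0 1 = -(f 0 1 + f 1 1) := by
    rw [hgf, hD.lower_zero, hD.upper, hD.lower_zero]; ring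
  have hs0 : ∀ n, g (n + 1) 0 = -(f n 0 + f (n + 2) 0) := by
    intro n
    rw [hgf, hD.upper, hD.upper, hD.lower_succ, hD.lower_succ]; ring
  have hs1 : ∀ n, g (n + 1) 1 = -(f n 1 + f (n + 2) 1) := by
    intro n
    rw [hgf, hD.lower_succ, hD.upper, hD.upper, hD.lower_succ]; ring
  have hsq : ∀ x y : ℂ, ‖-(x + y)‖ ^ 2 ≤ 2 * (‖x‖ ^ 2 + ‖y‖ ^ 2) := by
    intro x y
    rw [norm_neg]
    nlinarith [norm_add_le x y, norm_nonneg (x + y), sq_nonneg (‖x‖ - ‖y‖)]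
  have hb0 : ‖g 0‖ ^ 2 ≤ 2 * (‖f 0‖ ^ 2 + ‖f 1‖ ^ 2) := by
    rw [norm_apply_sq, norm_apply_sq, norm_apply_sq, h00, h01, norm_neg]
    linarith [hsq (f 0 1) (f 1 1), sq_nonneg ‖f 0 0‖, sq_nonneg ‖f 1 0‖]
  have hbs : ∀ n, ‖g (n + 1)‖ ^ 2 ≤ 2 * (‖f n‖ ^ 2 + ‖f (n + 2)‖ ^ 2) := by
    intro n
    rw [norm_apply_sq, norm_apply_sq, norm_apply_sq, hs0, hs1]
    linarith [hsq (f n 0) (f (n + 2) 0), hsq (f n 1) (f (n + 2) 1)]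
  have hf := f.hasSum_norm_sq
  have hg1 := (hasSum_nat_add_iff' 1).2 g.hasSum_norm_sq
  have hle := hasSum_le hbs hg1 ((hf.add ((hasSum_nat_add_iff' 2).2 hf)).mul_left 2)
  simp only [Finset.sum_range_succ, Finset.sum_range_zero, zero_add] at hle
  exact le_of_sq_le_sq (by nlinarith) (by positivity)

/-- A spectral point of `D` is real and `z² - (m² + 2)` lies in the spectrum of an operator of norm
at most `2`. -/
theorem exists_real_of_mem_spectrum (hD : IsFreeDirac m D) {z : ℂ} (hz : z ∈ spectrum ℂ D) :
    ∃ l : ℝ, (l : ℂ) = z ∧ m ^ 2 ≤ l ^ 2 ∧ l ^ 2 ≤ m ^ 2 + 4 := by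
  refine ⟨z.re, (hD.isSelfAdjoint.mem_spectrum_eq_re hz).symm, ?_⟩
  have hmem : z ^ 2 - (m ^ 2 + 2) ∈
      spectrum ℂ (D ^ 2 - algebraMap ℂ (SpinorL2 →L[ℂ] SpinorL2) (m ^ 2 + 2)) := by
    rw [← spectrum.sub_singleton_eq]
    exact Set.sub_mem_sub (spectrum.pow_mem_pow D 2 hz) rfl
  have hnorm : ‖z ^ 2 - (m ^ 2 + 2)‖ ≤ 2 :=
    (spectrum.norm_le_norm_mul_of_mem hmem).trans <|
      (mul_le_of_le_one_right (norm_nonneg _) ContinuousLinearMap.norm_id_le).trans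
        hD.norm_sq_sub_le
  rw [hD.isSelfAdjoint.mem_spectrum_eq_re hz] at hnorm
  have habs : |z.re ^ 2 - (m ^ 2 + 2)| ≤ 2 := by
    rw [← Real.norm_eq_abs, ← Complex.norm_real]
    exact_mod_cast hnorm
  rw [abs_le] at habs
  constructor <;> linarith [habs.1, habs.2]

/-- On the spectral bands the equation `(D - l) f = lowerDelta c` has only the trivial
square-summable solution. -/
theorem eq_zero_of_apply_eq (hD : IsFreeDirac m D) {l : ℝ} (h₁ : m ^ 2 ≤ l ^ 2)
    (h₂ : l ^ 2 ≤ m ^ 2 + 4) {f : SpinorL2} {c : ℂ}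
    (hf : D f = (l : ℂ) • f + lowerDelta c) : c = 0 ∧ f = 0 := by
  have hc : ∀ n i, D f n i = l * f n i + lowerDelta c n i := by
    intro n i
    rw [hf]
    rfl
  obtain ⟨h, ha, hb⟩ := dirac_recursion_eq_zero h₁ h₂ (c := c)
    (f.tendsto_coord 0) (f.tendsto_coord 1)
    (fun n => by
      rw [← hD.upper, hc]
      cases n with
      | zero => simp [lowerDelta_apply_zero]
      | succ n => simp [lowerDelta_apply_succ])
    (fun n => by rw [← hD.lower_succ, hc]; simp [lowerDelta_apply_succ])
    (by rw [← hD.lower_zero, hc]; simp [lowerDelta_apply_zero])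
  exact ⟨h, ext_coord (congrFun ha) (congrFun hb)⟩

theorem mem_spectrum (hD : IsFreeDirac m D) {l : ℝ} (h₁ : m ^ 2 ≤ l ^ 2)
    (h₂ : l ^ 2 ≤ m ^ 2 + 4) : (l : ℂ) ∈ spectrum ℂ D := by
  rw [spectrum.mem_iff]
  intro hunit
  obtain ⟨u, hu⟩ := hunit
  set δ : SpinorL2 := lowerDelta 1
  set f : SpinorL2 := (↑u⁻¹ : SpinorL2 →L[ℂ] SpinorL2) (-δ)
  have hf : (u : SpinorL2 →L[ℂ] SpinorL2) f = -δ := by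
    change ((u : SpinorL2 →L[ℂ] SpinorL2) * (↑u⁻¹ : SpinorL2 →L[ℂ] SpinorL2)) (-δ) = -δ
    rw [Units.mul_inv]
    rfl
  have hfl : (l : ℂ) • f - D f = -δ := by
    rw [← hf, hu, Algebra.algebraMap_eq_smul_one]
    rfl
  refine one_ne_zero (hD.eq_zero_of_apply_eq h₁ h₂ (f := f) (c := 1) ?_).1
  rw [← sub_eq_iff_eq_add', ← neg_sub, hfl, neg_neg]

theorem eq_zero_of_eigen (hD : IsFreeDirac m D) {z : ℂ} {f : SpinorL2} (hf : D f = z • f) :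
    f = 0 := by
  by_contra hne
  have hz : z ∈ spectrum ℂ D := by
    rw [spectrum.mem_iff]
    intro hunit
    obtain ⟨u, hu⟩ := hunit
    have h0 : (u : SpinorL2 →L[ℂ] SpinorL2) f = 0 := by
      rw [hu]
      simp [Algebra.algebraMap_eq_smul_one, hf]
    apply hne
    change (1 : SpinorL2 →L[ℂ] SpinorL2) f = 0
    rw [← u.inv_mul, mul_apply_eq_comp, h0, map_zero]
  obtain ⟨l, rfl, h₁, h₂⟩ := hD.exists_real_of_mem_spectrum hz
  exact hne (hD.eq_zero_of_apply_eq h₁ h₂ (c := 0) (by simpa using hf)).2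

end IsFreeDirac

end SpinorL2

theorem mem_union_Icc_neg_iff_sq {m s l : ℝ} (hm : 0 ≤ m) (hs : 0 ≤ s) :
    l ∈ Set.Icc (-s) (-m) ∪ Set.Icc m s ↔ m ^ 2 ≤ l ^ 2 ∧ l ^ 2 ≤ s ^ 2 := by
  rw [sq_le_sq, sq_le_sq, abs_of_nonneg hm, abs_of_nonneg hs, le_abs, abs_le]
  simp only [Set.mem_union, Set.mem_Icc]
  grind

/- The free discrete Dirac operator `D_m` on `ℓ²(ℤ₊, ℂ²)` (with boundary
convention `(d* f)(0) = f 0`) has no eigenvalues, and its spectrum is exactly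
`[-√(m²+4), -m] ∪ [m, √(m²+4)]`. `ℓ²(ℤ₊, ℂ²)` is modeled as
`lp (fun _ : ℕ => EuclideanSpace ℂ (Fin 2)) 2`. -/
theorem dirac_spectrum_N (m : ℝ) (hm : 0 ≤ m)
    (D : lp (fun _ : ℕ => EuclideanSpace ℂ (Fin 2)) 2 →L[ℂ]
      lp (fun _ : ℕ => EuclideanSpace ℂ (Fin 2)) 2)
    (hD0 : ∀ (f : lp (fun _ : ℕ => EuclideanSpace ℂ (Fin 2)) 2) (n : ℕ),
      (D f) n 0 = m * f n 0 + (f n 1 - f (n + 1) 1))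
    (hD1 : ∀ (f : lp (fun _ : ℕ => EuclideanSpace ℂ (Fin 2)) 2) (n : ℕ),
      (D f) (n + 1) 1 = (f (n + 1) 0 - f n 0) - m * f (n + 1) 1)
    (hD1' : ∀ (f : lp (fun _ : ℕ => EuclideanSpace ℂ (Fin 2)) 2),
      (D f) 0 1 = f 0 0 - m * f 0 1) :
    (∀ (lam : ℂ) (f : lp (fun _ : ℕ => EuclideanSpace ℂ (Fin 2)) 2),
        D f = lam • f → f = 0) ∧
    spectrum ℂ D = (fun x : ℝ => (x : ℂ)) ''
      (Set.Icc (-Real.sqrt (m ^ 2 + 4)) (-m) ∪ Set.Icc m (Real.sqrt (m ^ 2 + 4))) := by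
  have hD : SpinorL2.IsFreeDirac m D := ⟨hD0, hD1, hD1'⟩
  have hband : ∀ l : ℝ, l ∈ Set.Icc (-Real.sqrt (m ^ 2 + 4)) (-m) ∪
      Set.Icc m (Real.sqrt (m ^ 2 + 4)) ↔ m ^ 2 ≤ l ^ 2 ∧ l ^ 2 ≤ m ^ 2 + 4 := by
    intro l
    rw [mem_union_Icc_neg_iff_sq hm (Real.sqrt_nonneg _), Real.sq_sqrt (by positivity)]
  refine ⟨fun lam f hf => hD.eq_zero_of_eigen hf, Set.Subset.antisymm ?_ ?_⟩
  · intro z hz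
    obtain ⟨l, hl, h⟩ := hD.exists_real_of_mem_spectrum hz
    exact ⟨l, (hband l).2 h, hl⟩
  · rintro _ ⟨l, hl, rfl⟩
    obtain ⟨h₁, h₂⟩ := (hband l).1 hl
    exact hD.mem_spectrum h₁ h₂
end

section
/- Let 𝕏 = ℤ or 𝕏 = ℤ_k := ℤ ∩ [k,∞). For every λ ∈ ℍ, every V = (V₁,V₂)ᵗ ∈ ℓ^∞(𝕏,ℝ²) and every W = (W₁,W₂)ᵗ ∈ ℓ^∞(𝕏,ℂ²), the bounded operators Δ_{1,λ,V,W} and Δ_{2,λ,V,W} on ℓ²(𝕏,ℂ) are invertible (bijective with bounded inverse). -/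
noncomputable section
open scoped ENNReal ComplexConjugate InnerProductSpace

/-- The imaginary part of the quadratic form of a multiplication operator on `ℓ²` is bounded
above by any upper bound of the imaginary part of the symbol. -/
theorem lp.im_inner_mul_le {ι : Type*} {c : ι → ℂ} {b : ℝ} (hc : ∀ i, (c i).im ≤ b)
    {f g : lp (fun _ : ι => ℂ) 2} (hg : ∀ i, g i = c i * f i) :
    (⟪f, g⟫_ℂ).im ≤ b * ‖f‖ ^ 2 := by
  have hfg := Complex.hasSum_im (lp.hasSum_inner (𝕜 := ℂ) f g)
  have hnorm : HasSum (fun i => b * ‖f i‖ ^ 2) (b * ‖f‖ ^ 2) := by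
    have h := lp.hasSum_norm (p := 2) (by norm_num) f
    simp only [ENNReal.toReal_ofNat, Real.rpow_ofNat] at h
    exact h.mul_left b
  refine hasSum_le (fun i => ?_) hfg hnorm
  have hi : (⟪f i, g i⟫_ℂ).im = (c i).im * ‖f i‖ ^ 2 := by
    rw [hg, RCLike.inner_apply, mul_assoc, Complex.mul_conj, Complex.normSq_eq_norm_sq,
      Complex.im_mul_ofReal]
  rw [hi]
  exact mul_le_mul_of_nonneg_right (hc i) (sq_nonneg _)

/-- If `N` is dissipative and `M` is strictly accretive with respect to the imaginary part of the
quadratic form, then `D N D* - M` is invertible. -/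
theorem isUnit_comp_comp_adjoint_sub {E : Type*} [NormedAddCommGroup E] [InnerProductSpace ℂ E]
    [CompleteSpace E] (D N M : E →L[ℂ] E) {ε : ℝ} (hε : 0 < ε)
    (hN : ∀ x, (⟪x, N x⟫_ℂ).im ≤ 0) (hM : ∀ x, ε * ‖x‖ ^ 2 ≤ (⟪x, M x⟫_ℂ).im) :
    IsUnit (D ∘L N ∘L D.adjoint - M) := by
  refine ContinuousLinearMap.isUnit_of_forall_le_norm_inner_map _ (c := ⟨ε, hε.le⟩) hε
    fun x => ?_
  rw [norm_inner_symm]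
  refine le_trans ?_ (Complex.abs_im_le_norm _)
  refine le_trans ?_ (neg_le_abs _)
  have hx : ⟪x, (D ∘L N ∘L D.adjoint - M) x⟫_ℂ
      = ⟪D.adjoint x, N (D.adjoint x)⟫_ℂ - ⟪x, M x⟫_ℂ := by
    simp [ContinuousLinearMap.adjoint_inner_left]
  rw [hx, Complex.sub_im]
  change ‖x‖ ^ 2 * ε ≤ _
  linarith [hN (D.adjoint x), hM x]

/-- Supersymmetric pair of Schur complements: if `D'` is the adjoint of `D` and the symbols `a`,
`b` have imaginary part equal to `ε > 0`, then both `D b⁻¹ D' - a` and `D' a⁻¹ D - b` are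
invertible on `ℓ²`. -/
theorem lp.isUnit_schur_complements {ι : Type*} {a b : ι → ℂ} {ε : ℝ} (hε : 0 < ε)
    (ha : ∀ i, (a i).im = ε) (hb : ∀ i, (b i).im = ε)
    (D D' A A' B B' : lp (fun _ : ι => ℂ) 2 →L[ℂ] lp (fun _ : ι => ℂ) 2)
    (hD : D.adjoint = D')
    (hA : ∀ f i, A f i = a i * f i) (hA' : ∀ f i, A' f i = (a i)⁻¹ * f i)
    (hB : ∀ f i, B f i = b i * f i) (hB' : ∀ f i, B' f i = (b i)⁻¹ * f i) :
    IsUnit (D ∘L B' ∘L D' - A) ∧ IsUnit (D' ∘L A' ∘L D - B) := by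
  have dissipative {c : ι → ℂ} (hc : ∀ i, (c i).im = ε)
      {C : lp (fun _ : ι => ℂ) 2 →L[ℂ] lp (fun _ : ι => ℂ) 2}
      (hC : ∀ f i, C f i = (c i)⁻¹ * f i) (f : lp (fun _ : ι => ℂ) 2) :
      (⟪f, C f⟫_ℂ).im ≤ 0 := by
    have h := lp.im_inner_mul_le (c := fun i => (c i)⁻¹) (b := 0) (fun i => by
      rw [Complex.inv_im, hc]
      exact div_nonpos_of_nonpos_of_nonneg (by linarith) (Complex.normSq_nonneg _)) (hC f)
    simpa using h
  have accretive {c : ι → ℂ} (hc : ∀ i, (c i).im = ε)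
      {C : lp (fun _ : ι => ℂ) 2 →L[ℂ] lp (fun _ : ι => ℂ) 2}
      (hC : ∀ f i, C f i = c i * f i) (f : lp (fun _ : ι => ℂ) 2) :
      ε * ‖f‖ ^ 2 ≤ (⟪f, C f⟫_ℂ).im := by
    have h := lp.im_inner_mul_le (c := fun i => -c i) (b := -ε) (f := f) (g := -C f)
      (fun i => by simp [hc]) (fun i => by simp [hC])
    rw [inner_neg_right, Complex.neg_im] at h
    linarith
  subst hD
  refine ⟨isUnit_comp_comp_adjoint_sub D B' A hε (dissipative hb hB') (accretive ha hA), ?_⟩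
  simpa using isUnit_comp_comp_adjoint_sub D.adjoint A' B hε (dissipative ha hA') (accretive hb hB)

/-- The adjoint on `ℓ²` evaluated at a coordinate. -/
theorem lp.adjoint_apply_eq_inner_single {ι : Type*} [DecidableEq ι]
    (D : lp (fun _ : ι => ℂ) 2 →L[ℂ] lp (fun _ : ι => ℂ) 2) (f : lp (fun _ : ι => ℂ) 2) (i : ι) :
    D.adjoint f i = ⟪D (lp.single 2 i 1), f⟫_ℂ := by
  rw [← ContinuousLinearMap.adjoint_inner_right, lp.inner_single_left]
  simp

/-- The adjoint of a two-term difference operator on `ℓ²(ℤ)`. -/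
theorem lp.adjoint_difference_int {p q : ℤ → ℂ}
    {D D' : lp (fun _ : ℤ => ℂ) 2 →L[ℂ] lp (fun _ : ℤ => ℂ) 2}
    (hD : ∀ f n, D f n = p n * f n + q n * f (n + 1))
    (hD' : ∀ f n, D' f n = conj (p n) * f n + conj (q (n - 1)) * f (n - 1)) :
    D.adjoint = D' := by
  ext f n
  have hs : D (lp.single 2 n 1) = lp.single 2 n (p n) + lp.single 2 (n - 1) (q (n - 1)) := by
    ext i
    rw [hD, lp.coeFn_add, Pi.add_apply]
    simp only [lp.single_apply, Pi.single_apply]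
    grind
  rw [lp.adjoint_apply_eq_inner_single, hs, inner_add_left, lp.inner_single_left,
    lp.inner_single_left, hD', RCLike.inner_apply, RCLike.inner_apply]
  ring

/-- The adjoint of a two-term difference operator on `ℓ²(ℕ)`. -/
theorem lp.adjoint_difference_nat {p q : ℕ → ℂ}
    {D D' : lp (fun _ : ℕ => ℂ) 2 →L[ℂ] lp (fun _ : ℕ => ℂ) 2}
    (hD : ∀ f n, D f n = p n * f n + q n * f (n + 1))
    (hD'_zero : ∀ f, D' f 0 = conj (p 0) * f 0)
    (hD'_succ : ∀ f n, D' f (n + 1) = conj (p (n + 1)) * f (n + 1) + conj (q n) * f n) :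
    D.adjoint = D' := by
  ext f n
  rw [lp.adjoint_apply_eq_inner_single]
  cases n with
  | zero =>
    have hs : D (lp.single 2 0 1) = lp.single 2 0 (p 0) := by
      ext i
      rw [hD]
      simp only [lp.single_apply, Pi.single_apply]
      grind
    rw [hs, lp.inner_single_left, hD'_zero, RCLike.inner_apply, mul_comm]
  | succ n =>
    have hs : D (lp.single 2 (n + 1) 1) =
        lp.single 2 (n + 1) (p (n + 1)) + lp.single 2 n (q n) := by
      ext i
      rw [hD, lp.coeFn_add, Pi.add_apply]
      simp only [lp.single_apply, Pi.single_apply]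
      grind
    rw [hs, inner_add_left, lp.inner_single_left, lp.inner_single_left, hD'_succ,
      RCLike.inner_apply, RCLike.inner_apply]
    ring

/- For `λ ∈ ℍ` and bounded potentials `V = (V₁,V₂)` (real) and `W = (W₁,W₂)`
(complex), the operators `Δ_{1,λ,V,W} = d̃ (λ+m-V₂)⁻¹ d̃* - (λ-m-V₁)` and
`Δ_{2,λ,V,W} = d̃* (λ-m-V₁)⁻¹ d̃ - (λ+m-V₂)` on `ℓ²(𝕏,ℂ)` are invertible with
bounded inverse, both for `𝕏 = ℤ` and for `𝕏 = ℤ_k = ℤ ∩ [k,∞)` (the latter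
modeled on `ℓ²(ℕ,ℂ)` via the identification `j ↔ k + j`, with the boundary
convention `(d̃* f)` at the left endpoint). The operators `d̃`, `d̃*` and the
multiplication operators are characterized by their pointwise action. -/
theorem deltaOps_invertible (m : ℝ) (hm : 0 ≤ m) (lam : ℂ) (hlam : 0 < lam.im) :
    (∀ (V₁ V₂ : ℤ → ℝ) (W₁ W₂ : ℤ → ℂ),
      Memℓp V₁ ∞ → Memℓp V₂ ∞ → Memℓp W₁ ∞ → Memℓp W₂ ∞ →
      ∀ dtil dtilStar M1 M1inv M2 M2inv :
          lp (fun _ : ℤ => ℂ) 2 →L[ℂ] lp (fun _ : ℤ => ℂ) 2,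
        (∀ (f : lp (fun _ : ℤ => ℂ) 2) (n : ℤ),
          dtil f n = (1 + W₁ n) * f n + (-1 + W₂ n) * f (n + 1)) →
        (∀ (f : lp (fun _ : ℤ => ℂ) 2) (n : ℤ),
          dtilStar f n = (1 + conj (W₁ n)) * f n - (1 - conj (W₂ (n - 1))) * f (n - 1)) →
        (∀ (f : lp (fun _ : ℤ => ℂ) 2) (n : ℤ), M1 f n = (lam - m - V₁ n) * f n) →
        (∀ (f : lp (fun _ : ℤ => ℂ) 2) (n : ℤ), M1inv f n = (lam - m - V₁ n)⁻¹ * f n) →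
        (∀ (f : lp (fun _ : ℤ => ℂ) 2) (n : ℤ), M2 f n = (lam + m - V₂ n) * f n) →
        (∀ (f : lp (fun _ : ℤ => ℂ) 2) (n : ℤ), M2inv f n = (lam + m - V₂ n)⁻¹ * f n) →
        IsUnit (dtil ∘L M2inv ∘L dtilStar - M1) ∧
        IsUnit (dtilStar ∘L M1inv ∘L dtil - M2)) ∧
    (∀ (k : ℤ) (V₁ V₂ : ℤ → ℝ) (W₁ W₂ : ℤ → ℂ),
      Memℓp V₁ ∞ → Memℓp V₂ ∞ → Memℓp W₁ ∞ → Memℓp W₂ ∞ →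
      ∀ dtil dtilStar M1 M1inv M2 M2inv :
          lp (fun _ : ℕ => ℂ) 2 →L[ℂ] lp (fun _ : ℕ => ℂ) 2,
        (∀ (f : lp (fun _ : ℕ => ℂ) 2) (j : ℕ),
          dtil f j = (1 + W₁ (k + j)) * f j + (-1 + W₂ (k + j)) * f (j + 1)) →
        (∀ f : lp (fun _ : ℕ => ℂ) 2, dtilStar f 0 = (1 + conj (W₁ k)) * f 0) →
        (∀ (f : lp (fun _ : ℕ => ℂ) 2) (j : ℕ),
          dtilStar f (j + 1) =
            (1 + conj (W₁ (k + j + 1))) * f (j + 1) - (1 - conj (W₂ (k + j))) * f j) →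
        (∀ (f : lp (fun _ : ℕ => ℂ) 2) (j : ℕ), M1 f j = (lam - m - V₁ (k + j)) * f j) →
        (∀ (f : lp (fun _ : ℕ => ℂ) 2) (j : ℕ), M1inv f j = (lam - m - V₁ (k + j))⁻¹ * f j) →
        (∀ (f : lp (fun _ : ℕ => ℂ) 2) (j : ℕ), M2 f j = (lam + m - V₂ (k + j)) * f j) →
        (∀ (f : lp (fun _ : ℕ => ℂ) 2) (j : ℕ), M2inv f j = (lam + m - V₂ (k + j))⁻¹ * f j) →
        IsUnit (dtil ∘L M2inv ∘L dtilStar - M1) ∧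
        IsUnit (dtilStar ∘L M1inv ∘L dtil - M2)) := by
  constructor
  · intro V₁ V₂ W₁ W₂ _ _ _ _ dtil dtilStar M1 M1inv M2 M2inv hd hds h1 h1i h2 h2i
    have hadj : dtil.adjoint = dtilStar :=
      lp.adjoint_difference_int hd fun f n => by
        rw [hds]
        simp only [map_add, map_neg, map_one]
        ring
    exact lp.isUnit_schur_complements hlam (by simp) (by simp) dtil dtilStar M1 M1inv M2 M2inv
      hadj h1 h1i h2 h2i
  · intro k V₁ V₂ W₁ W₂ _ _ _ _ dtil dtilStar M1 M1inv M2 M2inv hd hds0 hds h1 h1i h2 h2i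
    have hadj : dtil.adjoint = dtilStar :=
      lp.adjoint_difference_nat (p := fun j => 1 + W₁ (k + j)) (q := fun j => -1 + W₂ (k + j)) hd
        (fun f => by simp [hds0])
        fun f j => by
          rw [hds]
          simp only [map_add, map_neg, map_one, Nat.cast_add, Nat.cast_one, add_assoc]
          ring
    exact lp.isUnit_schur_complements hlam (by simp) (by simp) dtil dtilStar M1 M1inv M2 M2inv
      hadj h1 h1i h2 h2i

end
end

section
/- Let 𝕏 = ℤ or 𝕏 = ℤ_k := ℤ ∩ [k,∞), λ ∈ ℍ, V = (V₁,V₂)ᵗ ∈ ℓ^∞(𝕏,ℝ²) and W = (W₁,W₂)ᵗ ∈ ℓ^∞(𝕏,ℂ²). Then H_{m,V,W} − λ is invertible on ℓ²(𝕏,ℂ²) and its inverse is the block operator (H_{m,V,W} − λ)⁻¹ = [[Δ_{1,λ,V,W}⁻¹, Δ_{1,λ,V,W}⁻¹·d̃·(λ+m−V₂)⁻¹],[Δ_{2,λ,V,W}⁻¹·d̃*·(λ−m−V₁)⁻¹, Δ_{2,λ,V,W}⁻¹]]. -/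
noncomputable section
open scoped ENNReal ComplexConjugate

theorem lp_sub_apply {ι : Type*} (f g : lp (fun _ : ι => ℂ) 2) (n : ι) :
    (f - g) n = f n - g n := rfl

theorem sub_smul_one_fst_apply {ι : Type*}
    (H : lp (fun _ : ι => ℂ) 2 × lp (fun _ : ι => ℂ) 2 →L[ℂ]
      lp (fun _ : ι => ℂ) 2 × lp (fun _ : ι => ℂ) 2)
    (c : ℂ) (f : lp (fun _ : ι => ℂ) 2 × lp (fun _ : ι => ℂ) 2) (n : ι) :
    ((H - c • 1) f).1 n = (H f).1 n - c * f.1 n := rfl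

theorem sub_smul_one_snd_apply {ι : Type*}
    (H : lp (fun _ : ι => ℂ) 2 × lp (fun _ : ι => ℂ) 2 →L[ℂ]
      lp (fun _ : ι => ℂ) 2 × lp (fun _ : ι => ℂ) 2)
    (c : ℂ) (f : lp (fun _ : ι => ℂ) 2 × lp (fun _ : ι => ℂ) 2) (n : ι) :
    ((H - c • 1) f).2 n = (H f).2 n - c * f.2 n := rfl

/-- Two-sided inverse of a block operator `[[-A, D], [D', -B]]` in terms of the inverses of both
of its Schur complements. -/
theorem block_inverse_of_schur_complements {E : Type*} [NormedAddCommGroup E] [NormedSpace ℂ E]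
    {D D' A Ainv B Binv S₁ S₂ : E →L[ℂ] E} {T : E × E →L[ℂ] E × E}
    (hA : ∀ f, Ainv (A f) = f) (hB : ∀ f, B (Binv f) = f) (hB' : ∀ f, Binv (B f) = f)
    (hT₁ : ∀ f, (T f).1 = D f.2 - A f.1) (hT₂ : ∀ f, (T f).2 = D' f.1 - B f.2)
    (hS₁ : ∀ f, S₁ ((D ∘L Binv ∘L D' - A) f) = f ∧ (D ∘L Binv ∘L D' - A) (S₁ f) = f)
    (hS₂ : ∀ f, S₂ ((D' ∘L Ainv ∘L D - B) f) = f ∧ (D' ∘L Ainv ∘L D - B) (S₂ f) = f) :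
    (∀ f, (S₁ ((T f).1 + D (Binv (T f).2)), S₂ (D' (Ainv (T f).1) + (T f).2)) = f) ∧
      ∀ g, T (S₁ (g.1 + D (Binv g.2)), S₂ (D' (Ainv g.1) + g.2)) = g := by
  have left : ∀ f, (S₁ ((T f).1 + D (Binv (T f).2)),
      S₂ (D' (Ainv (T f).1) + (T f).2)) = f := by
    intro f
    have e₁ : (T f).1 + D (Binv (T f).2) = (D ∘L Binv ∘L D' - A) f.1 := by
      simp [hT₁, hT₂, hB']
    have e₂ : D' (Ainv (T f).1) + (T f).2 = (D' ∘L Ainv ∘L D - B) f.2 := by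
      simp [hT₁, hT₂, hA]
    rw [e₁, e₂, (hS₁ _).1, (hS₂ _).1]
  have inj : ∀ g : E × E, S₁ (g.1 + D (Binv g.2)) = 0 → S₂ (D' (Ainv g.1) + g.2) = 0 → g = 0 := by
    intro g h₁ h₂
    have k₁ : g.1 + D (Binv g.2) = 0 := by rw [← (hS₁ (g.1 + _)).2, h₁, map_zero]
    have k₂ : D' (Ainv g.1) + g.2 = 0 := by rw [← (hS₂ (_ + g.2)).2, h₂, map_zero]
    have g₁ : g.1 = -D (Binv g.2) := eq_neg_of_add_eq_zero_left k₁
    have hz : (D' ∘L Ainv ∘L D - B) (Binv g.2) = 0 := by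
      rw [g₁, map_neg, map_neg, neg_add_eq_zero] at k₂
      simp [hB, k₂]
    have hBz : Binv g.2 = 0 := by rw [← (hS₂ (Binv g.2)).1, hz, map_zero]
    have g₂ : g.2 = 0 := by rw [← hB g.2, hBz, map_zero]
    exact Prod.ext (by simp [g₁, hBz]) g₂
  refine ⟨left, fun g => ?_⟩
  set u : E × E := (S₁ (g.1 + D (Binv g.2)), S₂ (D' (Ainv g.1) + g.2))
  have hl := left u
  have l₁ : S₁ ((T u).1 + D (Binv (T u).2)) = S₁ (g.1 + D (Binv g.2)) := congrArg Prod.fst hl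
  have l₂ : S₂ (D' (Ainv (T u).1) + (T u).2) = S₂ (D' (Ainv g.1) + g.2) := congrArg Prod.snd hl
  refine sub_eq_zero.mp (inj _ ?_ ?_)
  · rw [← sub_eq_zero, ← map_sub] at l₁
    rw [← l₁]
    congr 1
    simp only [Prod.fst_sub, Prod.snd_sub, map_sub]
    abel
  · rw [← sub_eq_zero, ← map_sub] at l₂
    rw [← l₂]
    congr 1
    simp only [Prod.fst_sub, Prod.snd_sub, map_sub]
    abel

/- For `λ ∈ ℍ`, `H_{m,V,W} - λ` is invertible on `ℓ²(𝕏,ℂ²)` and its inverse is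
the block operator
`[[Δ₁⁻¹, Δ₁⁻¹ d̃ (λ+m-V₂)⁻¹], [Δ₂⁻¹ d̃* (λ-m-V₁)⁻¹, Δ₂⁻¹]]`,
both for `𝕏 = ℤ` and for `𝕏 = ℤ_k` (modeled on `ℕ` via `j ↔ k + j`).
`ℓ²(𝕏,ℂ²)` is modeled as the product of two copies of `ℓ²(𝕏,ℂ)`, `H` is the
block operator `[[m+V₁, d̃],[d̃*, -m+V₂]]` characterized by its pointwise
action, `Δ₁ = d̃ M₂inv d̃* - M₁` and `Δ₂ = d̃* M₁inv d̃ - M₂` are the (invertible)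
Laplacian-like operators, and `S₁, S₂` denote their inverses. The conclusion
states that the displayed block operator is a two-sided inverse of `H - λ`. -/
theorem dirac_resolvent_schur (m : ℝ) (hm : 0 ≤ m) (lam : ℂ) (hlam : 0 < lam.im) :
    (∀ (V₁ V₂ : ℤ → ℝ) (W₁ W₂ : ℤ → ℂ),
      Memℓp V₁ ∞ → Memℓp V₂ ∞ → Memℓp W₁ ∞ → Memℓp W₂ ∞ →
      ∀ dtil dtilStar M1 M1inv M2 M2inv S₁ S₂ :
          lp (fun _ : ℤ => ℂ) 2 →L[ℂ] lp (fun _ : ℤ => ℂ) 2,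
      ∀ H : lp (fun _ : ℤ => ℂ) 2 × lp (fun _ : ℤ => ℂ) 2 →L[ℂ]
          lp (fun _ : ℤ => ℂ) 2 × lp (fun _ : ℤ => ℂ) 2,
        (∀ (f : lp (fun _ : ℤ => ℂ) 2) (n : ℤ),
          dtil f n = (1 + W₁ n) * f n + (-1 + W₂ n) * f (n + 1)) →
        (∀ (f : lp (fun _ : ℤ => ℂ) 2) (n : ℤ),
          dtilStar f n = (1 + conj (W₁ n)) * f n - (1 - conj (W₂ (n - 1))) * f (n - 1)) →
        (∀ (f : lp (fun _ : ℤ => ℂ) 2) (n : ℤ), M1 f n = (lam - m - V₁ n) * f n) →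
        (∀ (f : lp (fun _ : ℤ => ℂ) 2) (n : ℤ), M1inv f n = (lam - m - V₁ n)⁻¹ * f n) →
        (∀ (f : lp (fun _ : ℤ => ℂ) 2) (n : ℤ), M2 f n = (lam + m - V₂ n) * f n) →
        (∀ (f : lp (fun _ : ℤ => ℂ) 2) (n : ℤ), M2inv f n = (lam + m - V₂ n)⁻¹ * f n) →
        (∀ (f : lp (fun _ : ℤ => ℂ) 2 × lp (fun _ : ℤ => ℂ) 2) (n : ℤ),
          (H f).1 n = (m + V₁ n) * f.1 n +
            ((1 + W₁ n) * f.2 n + (-1 + W₂ n) * f.2 (n + 1))) →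
        (∀ (f : lp (fun _ : ℤ => ℂ) 2 × lp (fun _ : ℤ => ℂ) 2) (n : ℤ),
          (H f).2 n = ((1 + conj (W₁ n)) * f.1 n - (1 - conj (W₂ (n - 1))) * f.1 (n - 1)) +
            (-m + V₂ n) * f.2 n) →
        (∀ f, S₁ ((dtil ∘L M2inv ∘L dtilStar - M1) f) = f ∧
          (dtil ∘L M2inv ∘L dtilStar - M1) (S₁ f) = f) →
        (∀ f, S₂ ((dtilStar ∘L M1inv ∘L dtil - M2) f) = f ∧
          (dtilStar ∘L M1inv ∘L dtil - M2) (S₂ f) = f) →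
        (∀ f, (S₁ (((H - lam • 1) f).1 + dtil (M2inv (((H - lam • 1) f).2))),
               S₂ (dtilStar (M1inv (((H - lam • 1) f).1)) + ((H - lam • 1) f).2)) = f) ∧
        (∀ g, (H - lam • 1) (S₁ (g.1 + dtil (M2inv g.2)),
               S₂ (dtilStar (M1inv g.1) + g.2)) = g)) ∧
    (∀ (k : ℤ) (V₁ V₂ : ℤ → ℝ) (W₁ W₂ : ℤ → ℂ),
      Memℓp V₁ ∞ → Memℓp V₂ ∞ → Memℓp W₁ ∞ → Memℓp W₂ ∞ →
      ∀ dtil dtilStar M1 M1inv M2 M2inv S₁ S₂ :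
          lp (fun _ : ℕ => ℂ) 2 →L[ℂ] lp (fun _ : ℕ => ℂ) 2,
      ∀ H : lp (fun _ : ℕ => ℂ) 2 × lp (fun _ : ℕ => ℂ) 2 →L[ℂ]
          lp (fun _ : ℕ => ℂ) 2 × lp (fun _ : ℕ => ℂ) 2,
        (∀ (f : lp (fun _ : ℕ => ℂ) 2) (j : ℕ),
          dtil f j = (1 + W₁ (k + j)) * f j + (-1 + W₂ (k + j)) * f (j + 1)) →
        (∀ f : lp (fun _ : ℕ => ℂ) 2, dtilStar f 0 = (1 + conj (W₁ k)) * f 0) →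
        (∀ (f : lp (fun _ : ℕ => ℂ) 2) (j : ℕ),
          dtilStar f (j + 1) =
            (1 + conj (W₁ (k + j + 1))) * f (j + 1) - (1 - conj (W₂ (k + j))) * f j) →
        (∀ (f : lp (fun _ : ℕ => ℂ) 2) (j : ℕ), M1 f j = (lam - m - V₁ (k + j)) * f j) →
        (∀ (f : lp (fun _ : ℕ => ℂ) 2) (j : ℕ), M1inv f j = (lam - m - V₁ (k + j))⁻¹ * f j) →
        (∀ (f : lp (fun _ : ℕ => ℂ) 2) (j : ℕ), M2 f j = (lam + m - V₂ (k + j)) * f j) →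
        (∀ (f : lp (fun _ : ℕ => ℂ) 2) (j : ℕ), M2inv f j = (lam + m - V₂ (k + j))⁻¹ * f j) →
        (∀ (f : lp (fun _ : ℕ => ℂ) 2 × lp (fun _ : ℕ => ℂ) 2) (j : ℕ),
          (H f).1 j = (m + V₁ (k + j)) * f.1 j +
            ((1 + W₁ (k + j)) * f.2 j + (-1 + W₂ (k + j)) * f.2 (j + 1))) →
        (∀ f : lp (fun _ : ℕ => ℂ) 2 × lp (fun _ : ℕ => ℂ) 2,
          (H f).2 0 = (1 + conj (W₁ k)) * f.1 0 + (-m + V₂ k) * f.2 0) →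
        (∀ (f : lp (fun _ : ℕ => ℂ) 2 × lp (fun _ : ℕ => ℂ) 2) (j : ℕ),
          (H f).2 (j + 1) =
            ((1 + conj (W₁ (k + j + 1))) * f.1 (j + 1) - (1 - conj (W₂ (k + j))) * f.1 j) +
            (-m + V₂ (k + j + 1)) * f.2 (j + 1)) →
        (∀ f, S₁ ((dtil ∘L M2inv ∘L dtilStar - M1) f) = f ∧
          (dtil ∘L M2inv ∘L dtilStar - M1) (S₁ f) = f) →
        (∀ f, S₂ ((dtilStar ∘L M1inv ∘L dtil - M2) f) = f ∧
          (dtilStar ∘L M1inv ∘L dtil - M2) (S₂ f) = f) →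
        (∀ f, (S₁ (((H - lam • 1) f).1 + dtil (M2inv (((H - lam • 1) f).2))),
               S₂ (dtilStar (M1inv (((H - lam • 1) f).1)) + ((H - lam • 1) f).2)) = f) ∧
        (∀ g, (H - lam • 1) (S₁ (g.1 + dtil (M2inv g.2)),
               S₂ (dtilStar (M1inv g.1) + g.2)) = g)) := by
  have ne₁ : ∀ v : ℝ, lam - m - v ≠ 0 := fun v h => by
    simpa [hlam.ne'] using congrArg Complex.im h
  have ne₂ : ∀ v : ℝ, lam + m - v ≠ 0 := fun v h => by
    simpa [hlam.ne'] using congrArg Complex.im h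
  constructor
  · intro V₁ V₂ W₁ W₂ _ _ _ _ D D' M1 M1inv M2 M2inv S₁ S₂ H hD hD' hM1 hM1i hM2 hM2i hH₁ hH₂
      hS₁ hS₂
    refine block_inverse_of_schur_complements ?_ ?_ ?_ ?_ ?_ hS₁ hS₂
    · intro f; ext n; simp [hM1, hM1i, ne₁]
    · intro f; ext n; simp [hM2, hM2i, ne₂]
    · intro f; ext n; simp [hM2, hM2i, ne₂]
    · intro f; ext n
      rw [sub_smul_one_fst_apply, lp_sub_apply, hH₁, hD, hM1]; ring
    · intro f; ext n
      rw [sub_smul_one_snd_apply, lp_sub_apply, hH₂, hD', hM2]; ring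
  · intro k V₁ V₂ W₁ W₂ _ _ _ _ D D' M1 M1inv M2 M2inv S₁ S₂ H hD hD'₀ hD' hM1 hM1i hM2 hM2i
      hH₁ hH₂₀ hH₂ hS₁ hS₂
    refine block_inverse_of_schur_complements ?_ ?_ ?_ ?_ ?_ hS₁ hS₂
    · intro f; ext n; simp [hM1, hM1i, ne₁]
    · intro f; ext n; simp [hM2, hM2i, ne₂]
    · intro f; ext n; simp [hM2, hM2i, ne₂]
    · intro f; ext n
      rw [sub_smul_one_fst_apply, lp_sub_apply, hH₁, hD, hM1]; ring
    · intro f; ext n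
      cases n with
      | zero =>
        rw [sub_smul_one_snd_apply, lp_sub_apply, hH₂₀, hD'₀, hM2, Nat.cast_zero, add_zero]; ring
      | succ j =>
        rw [sub_smul_one_snd_apply, lp_sub_apply, hH₂, hD', hM2, Nat.cast_succ, ← add_assoc]; ring

end
end

section
/- Let λ ∈ ℍ, V = (V₁,V₂)ᵗ ∈ ℓ^∞(ℤ₊,ℝ²) and W = (W₁,W₂)ᵗ ∈ ℓ^∞(ℤ₊,ℂ²). Then for every n ∈ ℤ₊ the truncated operator Δ^{(n)}_{λ,V,W} on ℓ²(ℤ_n,ℂ) is invertible (bijective with bounded inverse). -/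
noncomputable section
open scoped ENNReal ComplexConjugate

/-- A continuous linear map on `ℓ²(ℕ, ℂ)` acting as a lower bidiagonal matrix is the adjoint of the
one acting as the conjugate-transposed upper bidiagonal matrix. -/
theorem adjoint_eq_of_bidiagonal {a b : ℕ → ℂ}
    {D E : lp (fun _ : ℕ => ℂ) 2 →L[ℂ] lp (fun _ : ℕ => ℂ) 2}
    (hD : ∀ (f : lp (fun _ : ℕ => ℂ) 2) (j : ℕ), D f j = a j * f j + b j * f (j + 1))
    (hE0 : ∀ f : lp (fun _ : ℕ => ℂ) 2, E f 0 = conj (a 0) * f 0)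
    (hE : ∀ (f : lp (fun _ : ℕ => ℂ) 2) (j : ℕ),
      E f (j + 1) = conj (a (j + 1)) * f (j + 1) + conj (b j) * f j) :
    D.adjoint = E := by
  have hD0 : D (lp.single 2 0 1) = lp.single 2 0 (a 0) := by
    ext j
    rcases j with _ | j <;> simp [hD]
  have hDs (k : ℕ) :
      D (lp.single 2 (k + 1) 1) = lp.single 2 (k + 1) (a (k + 1)) + lp.single 2 k (b k) := by
    ext j
    rw [hD]
    simp only [lp.coeFn_add, Pi.add_apply, lp.single_apply, Pi.single_apply, mul_ite, mul_one,
      mul_zero, add_left_inj]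
    split_ifs <;> simp_all
  have coord (g : lp (fun _ : ℕ => ℂ) 2) (k : ℕ) :
      D.adjoint g k = inner ℂ (D (lp.single 2 k 1)) g := by
    rw [← ContinuousLinearMap.adjoint_inner_right, lp.inner_single_left]
    simp
  ext g k
  rcases k with _ | k
  · rw [coord, hD0, lp.inner_single_left, hE0]
    simp [mul_comm]
  · rw [coord, hDs, inner_add_left, lp.inner_single_left, lp.inner_single_left, hE]
    simp [mul_comm]

/-- A lower bound on the imaginary parts of the weights of a multiplication operator on `ℓ²` bounds
the imaginary part of its quadratic form from below. -/
theorem le_im_inner_of_diagonal {ι : Type*} {w : ι → ℂ} {c : ℝ}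
    {M : lp (fun _ : ι => ℂ) 2 →L[ℂ] lp (fun _ : ι => ℂ) 2}
    (hM : ∀ (f : lp (fun _ : ι => ℂ) 2) (j : ι), M f j = w j * f j) (hw : ∀ j, c ≤ (w j).im)
    (f : lp (fun _ : ι => ℂ) 2) : c * ‖f‖ ^ 2 ≤ (inner ℂ f (M f)).im := by
  have hsq : HasSum (fun j => c * ‖f j‖ ^ 2) (c * ‖f‖ ^ 2) := by
    have h := lp.hasSum_norm (p := 2) (by norm_num) f
    norm_num at h
    exact h.mul_left c
  refine hasSum_le (fun j => ?_) hsq (Complex.hasSum_im (lp.hasSum_inner (𝕜 := ℂ) f (M f)))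
  have hj : inner ℂ (f j) (M f j) = w j * ((‖f j‖ ^ 2 : ℝ) : ℂ) := by
    rw [hM, RCLike.inner_apply, mul_assoc, RCLike.mul_conj]
    norm_num
  rw [hj, Complex.im_mul_ofReal]
  exact mul_le_mul_of_nonneg_right (hw j) (sq_nonneg _)

/- For `λ ∈ ℍ` and bounded potentials `V, W` on `ℤ₊`, the truncated operator
`Δ^{(n)}_{λ,V,W} = d̃* (λ-m-V₁|_{ℤ_n})⁻¹ d̃ - (λ+m-V₂|_{ℤ_n})` on `ℓ²(ℤ_n,ℂ)`
is invertible with bounded inverse, for every `n ∈ ℤ₊`. Here `ℓ²(ℤ_n,ℂ)` is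
modeled on `ℓ²(ℕ,ℂ)` via the identification `j ↔ n + j`, and the operators are
characterized by their pointwise action (with boundary convention at `j = 0`). -/
theorem truncated_delta_invertible (m : ℝ) (hm : 0 ≤ m) (lam : ℂ) (hlam : 0 < lam.im)
    (V₁ V₂ : ℕ → ℝ) (W₁ W₂ : ℕ → ℂ)
    (hV₁ : Memℓp V₁ ∞) (hV₂ : Memℓp V₂ ∞) (hW₁ : Memℓp W₁ ∞) (hW₂ : Memℓp W₂ ∞)
    (n : ℕ)
    (dtil dtilStar M1inv M2 : lp (fun _ : ℕ => ℂ) 2 →L[ℂ] lp (fun _ : ℕ => ℂ) 2)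
    (hdtil : ∀ (f : lp (fun _ : ℕ => ℂ) 2) (j : ℕ),
      dtil f j = (1 + W₁ (n + j)) * f j + (-1 + W₂ (n + j)) * f (j + 1))
    (hdtilStar0 : ∀ f : lp (fun _ : ℕ => ℂ) 2, dtilStar f 0 = (1 + conj (W₁ n)) * f 0)
    (hdtilStar : ∀ (f : lp (fun _ : ℕ => ℂ) 2) (j : ℕ),
      dtilStar f (j + 1) =
        (1 + conj (W₁ (n + j + 1))) * f (j + 1) - (1 - conj (W₂ (n + j))) * f j)
    (hM1inv : ∀ (f : lp (fun _ : ℕ => ℂ) 2) (j : ℕ),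
      M1inv f j = (lam - m - V₁ (n + j))⁻¹ * f j)
    (hM2 : ∀ (f : lp (fun _ : ℕ => ℂ) 2) (j : ℕ),
      M2 f j = (lam + m - V₂ (n + j)) * f j) :
    IsUnit (dtilStar ∘L M1inv ∘L dtil - M2) := by
  have hadj : dtil.adjoint = dtilStar := by
    refine adjoint_eq_of_bidiagonal hdtil (fun f => ?_) (fun f j => ?_)
    · simp [hdtilStar0]
    · rw [hdtilStar]
      simp only [map_add, map_neg, map_one, add_assoc]
      ring
  have hM2_im (f : lp (fun _ : ℕ => ℂ) 2) : lam.im * ‖f‖ ^ 2 ≤ (inner ℂ f (M2 f)).im :=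
    le_im_inner_of_diagonal hM2 (fun j => by simp) f
  have hM1_im (g : lp (fun _ : ℕ => ℂ) 2) : (inner ℂ g (M1inv g)).im ≤ 0 := by
    have h := le_im_inner_of_diagonal (M := -M1inv) (c := 0)
      (w := fun j => -(lam - m - V₁ (n + j))⁻¹) (fun f j => by simp [hM1inv])
      (fun j => by
        simp only [Complex.neg_im, Complex.inv_im, Complex.sub_im, Complex.ofReal_im, sub_zero,
          neg_div, neg_neg]
        exact div_nonneg hlam.le (Complex.normSq_nonneg _)) g
    simpa using h
  refine ContinuousLinearMap.isUnit_of_forall_le_norm_inner_map _ (c := ⟨lam.im, hlam.le⟩) hlam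
    fun f => ?_
  have him : (inner ℂ f ((dtilStar ∘L M1inv ∘L dtil - M2) f)).im =
      (inner ℂ (dtil f) (M1inv (dtil f))).im - (inner ℂ f (M2 f)).im := by
    simp [← hadj, ContinuousLinearMap.adjoint_inner_right]
  have habs := Complex.abs_im_le_norm (inner ℂ f ((dtilStar ∘L M1inv ∘L dtil - M2) f))
  rw [norm_inner_symm]
  change ‖f‖ ^ 2 * lam.im ≤ _
  linarith [neg_le_abs (inner ℂ f ((dtilStar ∘L M1inv ∘L dtil - M2) f)).im, hM2_im f,
    hM1_im (dtil f)]

end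
end
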